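/- arXiv:1308.6188 — 2 statements merged into one kernel-verified Lean document; each statement's English description precedes it below -/
import Mathlib

section
/- Let p < q and let u : ℝ → ℝ be four times continuously differentiable on [p,q] with u(p) = u''(p) = u''(q) = u'''(q) = 0 and u not identically zero on [p,q]. Then ∫_p^q (u''''(x) + u(x)) u(x) dx = ∫_p^q u''(x)² dx + ∫_p^q u(x)² dx > 0. -/
open Set

/-- **Strict positivity of the fourth-order operator `L⁴ : u ↦ u'''' + u` (Lemma 4).**
If `u` is four times continuously differentiable on `[p,q]` (with successive derivatives
`u₁, u₂, u₃, u₄`), satisfies `u p = u'' p = u'' q = u''' q = 0`, and is not identically zero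
on `[p,q]`, then `∫_p^q (u'''' + u) u = ∫_p^q (u'')² + ∫_p^q u² > 0`. -/
theorem fourth_order_operator_positive
    (p q : ℝ) (hpq : p < q)
    (u u₁ u₂ u₃ u₄ : ℝ → ℝ)
    (hu₁ : ∀ x ∈ Icc p q, HasDerivAt u (u₁ x) x)
    (hu₂ : ∀ x ∈ Icc p q, HasDerivAt u₁ (u₂ x) x)
    (hu₃ : ∀ x ∈ Icc p q, HasDerivAt u₂ (u₃ x) x)
    (hu₄ : ∀ x ∈ Icc p q, HasDerivAt u₃ (u₄ x) x)
    (hu₄c : ContinuousOn u₄ (Icc p q))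
    (hubc : u p = 0 ∧ u₂ p = 0 ∧ u₂ q = 0 ∧ u₃ q = 0)
    (hnontriv : ∃ x ∈ Icc p q, u x ≠ 0) :
    (∫ x in p..q, (u₄ x + u x) * u x) =
        (∫ x in p..q, (u₂ x)^2) + ∫ x in p..q, (u x)^2 ∧
    0 < ∫ x in p..q, (u₄ x + u x) * u x := by
  obtain ⟨h0, h2p, h2q, h3q⟩ := hubc
  have c0 : ContinuousOn u (Icc p q) := fun x hx => (hu₁ x hx).continuousAt.continuousWithinAt
  have c2 : ContinuousOn u₂ (Icc p q) := fun x hx => (hu₃ x hx).continuousAt.continuousWithinAt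
  have hI : uIcc p q = Icc p q := uIcc_of_le hpq.le
  have i40 : IntervalIntegrable (fun x => u₄ x * u x - (u₂ x)^2) MeasureTheory.volume p q :=
    ContinuousOn.intervalIntegrable (by rw [hI]; exact (hu₄c.mul c0).sub (c2.pow 2))
  have i2 : IntervalIntegrable (fun x => (u₂ x)^2) MeasureTheory.volume p q :=
    ContinuousOn.intervalIntegrable (by rw [hI]; exact c2.pow 2)
  have i0 : IntervalIntegrable (fun x => (u x)^2) MeasureTheory.volume p q :=
    ContinuousOn.intervalIntegrable (by rw [hI]; exact c0.pow 2)
  have key : (∫ x in p..q, (u₄ x * u x - (u₂ x)^2)) = 0 := by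
    rw [intervalIntegral.integral_eq_sub_of_hasDerivAt
      (f := fun x => u₃ x * u x - u₂ x * u₁ x) _ i40]
    · simp [h0, h2p, h2q, h3q]
    · intro x hx
      rw [hI] at hx
      have h := ((hu₄ x hx).mul (hu₁ x hx)).sub ((hu₃ x hx).mul (hu₂ x hx))
      refine h.congr_deriv ?_
      ring
  have e : (∫ x in p..q, (u₄ x + u x) * u x) =
      (∫ x in p..q, (u₂ x)^2) + ∫ x in p..q, (u x)^2 := by
    have e1 : (fun x => (u₄ x + u x) * u x) =
        fun x => (u₄ x * u x - (u₂ x)^2) + ((u₂ x)^2 + (u x)^2) := by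
      funext x; ring
    rw [e1, intervalIntegral.integral_add i40 (i2.add i0), key,
      intervalIntegral.integral_add i2 i0, zero_add]
  refine ⟨e, ?_⟩
  rw [e]
  obtain ⟨c, hc, hne⟩ := hnontriv
  have p0 : 0 < ∫ x in p..q, (u x)^2 :=
    intervalIntegral.integral_pos hpq (c0.pow 2) (fun x _ => sq_nonneg _) ⟨c, hc, by positivity⟩
  have p2 : 0 ≤ ∫ x in p..q, (u₂ x)^2 :=
    intervalIntegral.integral_nonneg hpq.le (fun x _ => sq_nonneg _)
  linarith
end

section
/- Let X and Y be complex Hilbert spaces, let B, B^δ : X → Y be bounded linear operators, z ∈ X, δ > 0, C̃ ≥ 0, and y^δ ∈ Y with ‖y^δ − B z‖ ≤ δ and operator norm ‖B − B^δ‖ ≤ C̃ δ. Set α = δ² and let z_α^δ = ((B^δ)* B^δ + α·id)^{-1} (B^δ)* y^δ. Then ‖B z_α^δ − B z‖ ≤ C δ, where C = C̃·((1 + C̃‖z‖)/2 + ‖z‖) + (1 + C̃‖z‖) + ‖z‖. -/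
open ContinuousLinearMap

/-- **Residual convergence rate of Tikhonov regularization with perturbed operator and data
(second assertion of Lemma 8).** If `‖yδ − Bz‖ ≤ δ`, `‖B − Bδ‖ ≤ C̃δ`, `α = δ²`, and
`zαδ = ((Bδ)*Bδ + α·id)⁻¹ (Bδ)* yδ`, then `‖B zαδ − B z‖ ≤ C δ` with
`C = C̃((1 + C̃‖z‖)/2 + ‖z‖) + (1 + C̃‖z‖) + ‖z‖`. -/
theorem tikhonov_perturbed_residual_rate
    (X Y : Type*) [NormedAddCommGroup X] [InnerProductSpace ℂ X] [CompleteSpace X]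
    [NormedAddCommGroup Y] [InnerProductSpace ℂ Y] [CompleteSpace Y]
    (B Bδ : X →L[ℂ] Y) (z : X) (δ : ℝ) (hδ : 0 < δ) (Ctilde : ℝ) (hC : 0 ≤ Ctilde)
    (yδ : Y) (hy : ‖yδ - B z‖ ≤ δ) (hop : ‖B - Bδ‖ ≤ Ctilde * δ)
    (zαδ : X)
    (hz : ((adjoint Bδ).comp Bδ + ((δ^2 : ℝ) : ℂ) • (1 : X →L[ℂ] X)) zαδ =
      adjoint Bδ yδ) :
    ‖B zαδ - B z‖ ≤
      (Ctilde * ((1 + Ctilde * ‖z‖) / 2 + ‖z‖) + (1 + Ctilde * ‖z‖) + ‖z‖) * δ := by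
  obtain ⟨e, rfl⟩ : ∃ e, zαδ = e + z := ⟨zαδ - z, by simp⟩
  have h1 := congrArg (fun v => (inner ℂ e v).re) hz
  have key : (inner ℂ (Bδ e) (Bδ e)).re + δ^2 * (inner ℂ e e).re =
      (inner ℂ (Bδ e) (yδ - Bδ z)).re - δ^2 * (inner ℂ e z).re := by
    simp only [ContinuousLinearMap.add_apply, ContinuousLinearMap.comp_apply,
      ContinuousLinearMap.smul_apply, ContinuousLinearMap.one_apply, inner_add_right,
      inner_smul_right, adjoint_inner_right, map_add, Complex.add_re, Complex.re_ofReal_mul,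
      smul_add] at h1
    simp only [inner_sub_right, Complex.sub_re]
    linarith
  have e1 : (inner ℂ (Bδ e) (Bδ e)).re = ‖Bδ e‖ ^ 2 := inner_self_eq_norm_sq (𝕜 := ℂ) _
  have e2 : (inner ℂ e e).re = ‖e‖ ^ 2 := inner_self_eq_norm_sq (𝕜 := ℂ) _
  have i1 : (inner ℂ (Bδ e) (yδ - Bδ z)).re ≤ ‖Bδ e‖ * ‖yδ - Bδ z‖ :=
    re_inner_le_norm (𝕜 := ℂ) _ _
  have i2 : -(inner ℂ e z).re ≤ ‖e‖ * ‖z‖ := by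
    have := re_inner_le_norm (𝕜 := ℂ) e (-z)
    simpa using this
  have hw : ‖yδ - Bδ z‖ ≤ (1 + Ctilde * ‖z‖) * δ := by
    have h : yδ - Bδ z = (yδ - B z) + (B - Bδ) z := by
      simp
    have h3 := (B - Bδ).le_of_opNorm_le hop z
    rw [h]
    refine (norm_add_le _ _).trans ?_
    linarith
  have hB : ‖B (e + z) - B z‖ ≤ ‖Bδ e‖ + Ctilde * δ * ‖e‖ := by
    have h : B (e + z) - B z = Bδ e + (B - Bδ) e := by simp
    have h3 := (B - Bδ).le_of_opNorm_le hop e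
    rw [h]
    exact (norm_add_le _ _).trans (by linarith)
  obtain ⟨a, ha⟩ : ∃ a, ‖Bδ e‖ = a * δ := ⟨‖Bδ e‖ / δ, by field_simp⟩
  have hn := norm_nonneg z
  have hb := norm_nonneg e
  have ha0 : 0 ≤ a := by
    have := norm_nonneg (Bδ e)
    rw [ha] at this
    exact nonneg_of_mul_nonneg_left this hδ
  have hm0 : 0 ≤ Ctilde * ‖z‖ := by positivity
  rw [e1, e2, ha] at key
  rw [ha] at i1 hB
  generalize ‖e‖ = b at *
  generalize ‖z‖ = n at *
  obtain ⟨m, hm⟩ : ∃ m, m = 1 + Ctilde * n := ⟨_, rfl⟩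
  rw [← hm] at hw ⊢
  have hm1 : 0 ≤ m := by linarith
  have hδ2 : 0 < δ ^ 2 := by positivity
  have E : a ^ 2 + b ^ 2 ≤ a * m + b * n := by
    have j1 : a * δ * ‖yδ - Bδ z‖ ≤ a * δ * (m * δ) :=
      mul_le_mul_of_nonneg_left hw (by positivity)
    have j2 := mul_le_mul_of_nonneg_left i2 hδ2.le
    have : δ ^ 2 * (a ^ 2 + b ^ 2) ≤ δ ^ 2 * (a * m + b * n) := by nlinarith
    exact le_of_mul_le_mul_left this hδ2
  have hbb : b ≤ m / 2 + n := by
    by_contra! h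
    nlinarith [sq_nonneg (a - m / 2), mul_nonneg hm1 hn]
  have haa : a ≤ m + n := by
    by_contra! h
    nlinarith [sq_nonneg (b - n / 2), mul_nonneg hm1 hn]
  have k1 := mul_le_mul_of_nonneg_left hbb (mul_nonneg hC hδ.le)
  have k2 := mul_le_mul_of_nonneg_right haa hδ.le
  linarith
end
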